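/- Let G be a finite simple graph whose complement is not bipartite. Then the closed neighborhood hypergraph N[G] is a circular-arc hypergraph if and only if G is a proper circular-arc graph. -/

import Mathlib

/-!
A set containing a point `c` of the circle is an arc iff, for each of its points `b`, it contains
one of the two circular intervals `[c, b]` and `[b, c]`.

*From an arc model to an arc ordering.* The start points of pairwise incomparable arcs are
distinct; order the vertices by them. If the start of `b` lies in the arc of `v`, then so do all
starts between `v` and `b`. If the start of `v` lies in the arc of `b`, then it lies in the arc of
every `w` starting between `b` and `v`, as that arc may not end inside the arc of `b`. So each
`N[v]` is an arc.

*From an arc ordering to an arc model.* The key fact is that `[u, v] ⊆ N[u]` iff `[u, v] ⊆ N[v]`.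
Otherwise, up to reflection, `[u, v] ⊆ N[u]` and `[v, u] ⊆ N[v]`. Then every `N[x]` reaches from
`x` back or forward to `u` (for `x` in `[u, v)`) or to `v` (for `x` in `[v, u)`). Those of `[u, v)`
reaching back and those of `[v, u)` reaching forward form a clique, and so do the others, so the
complement would be bipartite; the same argument shows that no vertex is universal. Let now
`[v, v + q v]` be the longest interval from `v` inside `N[v]`. By the key fact these arcs form an
intersection model of the graph in which inclusions occur only between arcs with a common end;
stretching the circle by a factor `n + 1` leaves room to separate these ends.
-/

open Set

/-- The closed neighborhood of a vertex: the vertex together with its neighbors. -/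
def ClosedNbhd {V : Type*} (G : SimpleGraph V) (v : V) : Set V :=
  {u | u = v ∨ G.Adj u v}

/-- `S` is an interval (order-convex set) with respect to the order relation `r`. -/
def IsIntervalWrt {α : Type*} (r : α → α → Prop) (S : Set α) : Prop :=
  ∀ x y z, r x y → r y z → x ∈ S → z ∈ S → y ∈ S

/-- A family of hyperedges forms an interval hypergraph: some linear order on the
vertices makes every hyperedge an interval (a set of consecutive elements). -/
def IsIntervalHypergraph {α ι : Type*} (H : ι → Set α) : Prop :=
  ∃ r : α → α → Prop, IsLinearOrder α r ∧ ∀ i, IsIntervalWrt r (H i)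

/-- `S ⊆ ZMod n` is an arc: a set of (at most `n`) circularly consecutive points. -/
def IsArc (n : ℕ) (S : Set (ZMod n)) : Prop :=
  ∃ a : ZMod n, ∃ k : ℕ, k ≤ n ∧ S = {x | ∃ i : ℕ, i < k ∧ x = a + (i : ZMod n)}

/-- Arcs `A` and `B` share their start point: some point is a start point of both. -/
def SharesStart (n : ℕ) (A B : Set (ZMod n)) : Prop :=
  ∃ a, a ∈ A ∧ a - 1 ∉ A ∧ a ∈ B ∧ a - 1 ∉ B

/-- Arcs `A` and `B` share their end point: some point is an end point of both. -/
def SharesEnd (n : ℕ) (A B : Set (ZMod n)) : Prop :=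
  ∃ a, a ∈ A ∧ a + 1 ∉ A ∧ a ∈ B ∧ a + 1 ∉ B

/-- `G` is a proper interval graph: it has an intersection model consisting of
nonempty integer intervals that are pairwise incomparable under inclusion. -/
def IsProperIntervalGraph {V : Type*} (G : SimpleGraph V) : Prop :=
  ∃ l : V → Set ℤ,
    (∀ v, ∃ a b : ℤ, a ≤ b ∧ l v = Set.Icc a b) ∧
    (∀ u v, u ≠ v → ¬ l u ⊆ l v) ∧
    (∀ u v, u ≠ v → (G.Adj u v ↔ (l u ∩ l v).Nonempty))

/-- `G` is a circular-arc graph: it has an intersection model consisting of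
nonempty arcs of some circle `ZMod n`. -/
def IsCAGraph {V : Type*} (G : SimpleGraph V) : Prop :=
  ∃ n : ℕ, 0 < n ∧ ∃ l : V → Set (ZMod n),
    Function.Injective l ∧
    (∀ v, (l v).Nonempty ∧ IsArc n (l v)) ∧
    (∀ u v, u ≠ v → (G.Adj u v ↔ (l u ∩ l v).Nonempty))

/-- `G` is a proper circular-arc graph: it has an intersection model consisting of
nonempty arcs of some circle `ZMod n`, pairwise incomparable under inclusion. -/
def IsPCAGraph {V : Type*} (G : SimpleGraph V) : Prop :=
  ∃ n : ℕ, 0 < n ∧ ∃ l : V → Set (ZMod n),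
    Function.Injective l ∧
    (∀ v, (l v).Nonempty ∧ IsArc n (l v)) ∧
    (∀ u v, u ≠ v → ¬ l u ⊆ l v) ∧
    (∀ u v, u ≠ v → (G.Adj u v ↔ (l u ∩ l v).Nonempty))

/-- `G` is bipartite: the vertex set splits into two independent sets. -/
def IsBipartite {V : Type*} (G : SimpleGraph V) : Prop :=
  ∃ U : Set V, (∀ u ∈ U, ∀ v ∈ U, ¬ G.Adj u v) ∧ (∀ u ∉ U, ∀ v ∉ U, ¬ G.Adj u v)

section ClockwiseDistance

variable {n : ℕ}

/-- The clockwise distance from `x` to `y` on the circle `ZMod n`. Statements about the circular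
order become linear arithmetic of these natural numbers through `cwDist_add_cwDist`. -/
def cwDist (x y : ZMod n) : ℕ :=
  (y - x).val

/-- The clockwise closed interval from `a` to `b`. Unlike `Set.cIcc`, it is `{a}` when `a = b`. -/
def cwIcc (a b : ZMod n) : Set (ZMod n) :=
  {x | cwDist a x ≤ cwDist a b}

/-- The arc of `k` points that starts at `a`; it is the whole circle when `n ≤ k`. -/
def cwArc (a : ZMod n) (k : ℕ) : Set (ZMod n) :=
  {x | cwDist a x < k}

lemma mem_cwIcc {a b x : ZMod n} : x ∈ cwIcc a b ↔ cwDist a x ≤ cwDist a b :=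
  Iff.rfl

lemma mem_cwArc {a x : ZMod n} {k : ℕ} : x ∈ cwArc a k ↔ cwDist a x < k :=
  Iff.rfl

lemma cwDist_self (x : ZMod n) : cwDist x x = 0 := by
  simp [cwDist]

lemma eq_of_cwDist_eq_zero {x y : ZMod n} (h : cwDist x y = 0) : x = y :=
  (sub_eq_zero.1 ((ZMod.val_eq_zero _).1 h)).symm

lemma cwDist_pos {x y : ZMod n} (h : x ≠ y) : 0 < cwDist x y :=
  Nat.pos_of_ne_zero fun h₀ => h (eq_of_cwDist_eq_zero h₀)

lemma cwDist_neg_neg (x y : ZMod n) : cwDist (-x) (-y) = cwDist y x := by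
  rw [cwDist, cwDist, neg_sub_neg]

lemma cwDist_add_natCast (x : ZMod n) {i : ℕ} (hi : i < n) : cwDist x (x + (i : ZMod n)) = i := by
  simp [cwDist, ZMod.val_natCast_of_lt hi]

lemma right_mem_cwIcc (a b : ZMod n) : b ∈ cwIcc a b :=
  le_refl (cwDist a b)

lemma left_mem_cwIcc (a b : ZMod n) : a ∈ cwIcc a b :=
  (cwDist_self a).trans_le (Nat.zero_le _)

variable [NeZero n]

lemma cwDist_lt (x y : ZMod n) : cwDist x y < n :=
  ZMod.val_lt _

lemma add_cwDist (x y : ZMod n) : x + (cwDist x y : ZMod n) = y := by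
  simp [cwDist]

lemma cwDist_add_cwDist (x y z : ZMod n) :
    cwDist x y + cwDist y z = cwDist x z ∨ cwDist x y + cwDist y z = cwDist x z + n := by
  have hsum : z - x = (y - x) + (z - y) := by ring
  rw [cwDist, cwDist, cwDist, hsum]
  rcases lt_or_ge ((y - x).val + (z - y).val) n with h | h
  · exact Or.inl (ZMod.val_add_of_lt h).symm
  · exact Or.inr (ZMod.val_add_val_of_le h)

lemma cwDist_add_cwDist_swap {x y : ZMod n} (h : x ≠ y) : cwDist x y + cwDist y x = n := by
  have := cwDist_add_cwDist x y x
  have := cwDist_self x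
  have := cwDist_pos h
  omega

lemma cwDist_le_cwDist_iff_val (u x y : ZMod n) : cwDist u x ≤ cwDist u y ↔
    (u.val ≤ x.val ∧ (x.val ≤ y.val ∨ y.val < u.val)) ∨
      (x.val < u.val ∧ y.val < u.val ∧ x.val ≤ y.val) := by
  have cwDist_zero : ∀ a : ZMod n, cwDist 0 a = a.val := fun a => by simp [cwDist]
  have hx := cwDist_add_cwDist 0 u x
  have hy := cwDist_add_cwDist 0 u y
  have := cwDist_lt u x
  have := cwDist_lt u y
  have := ZMod.val_lt x
  have := ZMod.val_lt y
  simp only [cwDist_zero] at hx hy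
  omega

lemma mem_cwIcc_iff_right {a b x : ZMod n} : x ∈ cwIcc a b ↔ cwDist x b ≤ cwDist a b := by
  rw [mem_cwIcc]
  have := cwDist_add_cwDist a x b
  have := cwDist_lt a x
  have := cwDist_lt x b
  omega

lemma neg_cwIcc (a b : ZMod n) : -cwIcc a b = cwIcc (-b) (-a) := by
  ext x
  rw [mem_neg, mem_cwIcc_iff_right, mem_cwIcc, ← cwDist_neg_neg b, cwDist_neg_neg b a, neg_neg]

lemma cwIcc_subset_cwIcc_left {a b x : ZMod n} (hx : x ∈ cwIcc a b) : cwIcc x b ⊆ cwIcc a b :=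
  fun _ hy => mem_cwIcc_iff_right.2
    ((mem_cwIcc_iff_right.1 hy).trans (mem_cwIcc_iff_right.1 hx))

lemma cwArc_inter_cwArc_nonempty {a b : ZMod n} {k l : ℕ} (hk : 0 < k) (hl : 0 < l) :
    (cwArc a k ∩ cwArc b l).Nonempty ↔ cwDist a b < k ∨ cwDist b a < l := by
  constructor
  · rintro ⟨x, hxa, hxb⟩
    rw [mem_cwArc] at hxa hxb
    have := cwDist_add_cwDist a b x
    have := cwDist_add_cwDist b a x
    have := cwDist_add_cwDist a b a
    have := cwDist_self a
    have := cwDist_lt a b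
    have := cwDist_lt b x
    omega
  · rintro (h | h)
    · exact ⟨b, h, (cwDist_self b).trans_lt hl⟩
    · exact ⟨a, (cwDist_self a).trans_lt hk, h⟩

lemma cwArc_subset_cwArc {a b : ZMod n} {k l : ℕ} (h : cwDist b a + k ≤ l) :
    cwArc a k ⊆ cwArc b l := by
  intro x hx
  rw [mem_cwArc] at hx ⊢
  have := cwDist_add_cwDist b a x
  omega

lemma cwDist_add_le_of_cwArc_subset {a b : ZMod n} {k l : ℕ} (hk : 0 < k) (hl : l < n)
    (h : cwArc a k ⊆ cwArc b l) : cwDist b a + k ≤ l := by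
  by_contra! hlt
  have hstart : cwDist b a < l := h ((cwDist_self a).trans_lt hk)
  -- The first point after the arc at `b` would lie in the arc at `a`.
  have hdist := cwDist_add_natCast b hl
  have hend : ¬ cwDist a (b + (l : ZMod n)) < k := fun hmem => (h hmem).ne hdist
  have := cwDist_add_cwDist b a (b + (l : ZMod n))
  have := cwDist_lt a (b + (l : ZMod n))
  omega

end ClockwiseDistance

section Arc

variable {n : ℕ} [NeZero n] {S : Set (ZMod n)} {c : ZMod n}

lemma isArc_iff_exists_cwArc : IsArc n S ↔ ∃ a k, S = cwArc a k := by
  have range_eq_cwArc : ∀ (a : ZMod n) {k : ℕ}, k ≤ n →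
      {x | ∃ i : ℕ, i < k ∧ x = a + (i : ZMod n)} = cwArc a k := by
    intro a k hk
    ext x
    constructor
    · rintro ⟨i, hi, rfl⟩
      exact (cwDist_add_natCast a (hi.trans_le hk)).trans_lt hi
    · exact fun hx => ⟨_, hx, (add_cwDist a x).symm⟩
  constructor
  · rintro ⟨a, k, hk, rfl⟩
    exact ⟨a, k, range_eq_cwArc a hk⟩
  · rintro ⟨a, k, rfl⟩
    refine ⟨a, min k n, min_le_right k n, ?_⟩
    rw [range_eq_cwArc a (min_le_right k n)]
    ext x
    rw [mem_cwArc, mem_cwArc, lt_min_iff, and_iff_left (cwDist_lt a x)]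

lemma cwIcc_subset_cwArc_or {a b : ZMod n} {k : ℕ} (hc : c ∈ cwArc a k) (hb : b ∈ cwArc a k) :
    cwIcc c b ⊆ cwArc a k ∨ cwIcc b c ⊆ cwArc a k := by
  wlog h : cwDist a c ≤ cwDist a b generalizing b c
  · exact (this hb hc (le_of_not_ge h)).symm
  refine Or.inl fun x hx => ?_
  rw [mem_cwIcc] at hx
  rw [mem_cwArc] at hb ⊢
  have := cwDist_add_cwDist a c b
  have := cwDist_add_cwDist a c x
  have := cwDist_lt c b
  omega

lemma exists_forward_reach (hc : c ∈ S) (hS : S ≠ univ) :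
    ∃ q, q + 1 < n ∧ ∀ b, cwIcc c b ⊆ S ↔ cwDist c b ≤ q := by
  classical
  obtain ⟨x, hx⟩ := (ne_univ_iff_exists_notMem S).1 hS
  have hex : ∃ i : ℕ, c + (i : ZMod n) ∉ S := ⟨cwDist c x, by rwa [add_cwDist]⟩
  obtain ⟨m, hm, hmin⟩ : ∃ m : ℕ, c + (m : ZMod n) ∉ S ∧ ∀ i < m, c + (i : ZMod n) ∈ S :=
    ⟨Nat.find hex, Nat.find_spec hex, fun i hi => not_not.1 (Nat.find_min hex hi)⟩
  have hm0 : m ≠ 0 := by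
    rintro rfl
    simp [hc] at hm
  have hmn : m < n := by
    by_contra! hle
    exact hx (add_cwDist c x ▸ hmin _ ((cwDist_lt c x).trans_le hle))
  refine ⟨m - 1, by omega, fun b => ⟨fun h => ?_, fun h y hy => ?_⟩⟩
  · by_contra! hlt
    refine hm (h ?_)
    rw [mem_cwIcc, cwDist_add_natCast c hmn]
    omega
  · rw [mem_cwIcc] at hy
    exact add_cwDist c y ▸ hmin _ (by omega)

lemma exists_backward_reach (hc : c ∈ S) (hS : S ≠ univ) :
    ∃ p, p + 1 < n ∧ ∀ b, cwIcc b c ⊆ S ↔ cwDist b c ≤ p := by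
  have hS' : -S ≠ univ := fun h => hS (by rw [← neg_neg S, h, neg_univ])
  obtain ⟨p, hp, h⟩ := exists_forward_reach (S := -S) (neg_mem_neg.2 hc) hS'
  refine ⟨p, hp, fun b => ?_⟩
  rw [← neg_subset_neg, neg_cwIcc, h, cwDist_neg_neg]

lemma isArc_of_forall_cwIcc (hc : c ∈ S) (h : ∀ b ∈ S, cwIcc c b ⊆ S ∨ cwIcc b c ⊆ S) :
    IsArc n S := by
  rw [isArc_iff_exists_cwArc]
  by_cases hS : S = univ
  · exact ⟨c, n, hS.trans (eq_univ_of_forall fun x => cwDist_lt c x).symm⟩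
  obtain ⟨q, -, hq⟩ := exists_forward_reach hc hS
  obtain ⟨p, hpn, hp⟩ := exists_backward_reach hc hS
  have mem_iff : ∀ b, b ∈ S ↔ cwDist c b ≤ q ∨ cwDist b c ≤ p := by
    intro b
    rw [← hq, ← hp]
    exact ⟨h b, fun hb => hb.elim (· (right_mem_cwIcc c b)) (· (left_mem_cwIcc b c))⟩
  obtain ⟨x, hx⟩ := (ne_univ_iff_exists_notMem S).1 hS
  have hxc : x ≠ c := fun e => hx (e ▸ hc)
  have hstart : cwDist (c - (p : ZMod n)) c = p := by
    simpa using cwDist_add_natCast (c - (p : ZMod n)) (i := p) (by omega)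
  refine ⟨c - (p : ZMod n), p + q + 1, ?_⟩
  ext b
  rw [mem_iff] at hx
  rw [mem_iff, mem_cwArc]
  have := cwDist_add_cwDist (c - (p : ZMod n)) c b
  have := cwDist_add_cwDist (c - (p : ZMod n)) b c
  have := cwDist_add_cwDist_swap hxc
  have := cwDist_lt c b
  have := cwDist_lt b c
  have := cwDist_lt (c - (p : ZMod n)) b
  have := cwDist_add_cwDist c b c
  have := cwDist_self c
  omega

lemma isArc_iff_forall_cwIcc (hc : c ∈ S) :
    IsArc n S ↔ ∀ b ∈ S, cwIcc c b ⊆ S ∨ cwIcc b c ⊆ S := by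
  refine ⟨fun h b hb => ?_, isArc_of_forall_cwIcc hc⟩
  obtain ⟨a, k, rfl⟩ := isArc_iff_exists_cwArc.1 h
  exact cwIcc_subset_cwArc_or hc hb

lemma IsArc.neg (h : IsArc n S) : IsArc n (-S) := by
  rcases S.eq_empty_or_nonempty with rfl | ⟨c, hc⟩
  · rwa [neg_empty]
  · rw [isArc_iff_forall_cwIcc hc] at h
    rw [isArc_iff_forall_cwIcc (neg_mem_neg.2 hc)]
    intro b hb
    have := h (-b) hb
    rwa [← neg_subset_neg, neg_cwIcc, ← neg_subset_neg (s := cwIcc (-b) c), neg_cwIcc, neg_neg,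
      or_comm] at this

end Arc

section Graph

variable {V W : Type*} {G : SimpleGraph V} {H : SimpleGraph W}

lemma mem_closedNbhd_comm {u v : V} : u ∈ ClosedNbhd G v ↔ v ∈ ClosedNbhd G u :=
  or_congr eq_comm (G.adj_comm u v)

lemma self_mem_closedNbhd (v : V) : v ∈ ClosedNbhd G v :=
  Or.inl rfl

lemma mem_closedNbhd_iff_adj {u v : V} (h : u ≠ v) : u ∈ ClosedNbhd G v ↔ G.Adj u v :=
  or_iff_right h

lemma image_closedNbhd (φ : G ≃g H) (v : V) :
    φ '' ClosedNbhd G v = ClosedNbhd H (φ v) := by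
  ext y
  obtain ⟨x, rfl⟩ := φ.surjective y
  rw [φ.injective.mem_set_image]
  exact or_congr φ.injective.eq_iff.symm φ.map_adj_iff.symm

lemma IsBipartite.of_embedding (φ : G ↪g H) (h : IsBipartite H) : IsBipartite G := by
  obtain ⟨U, hU, hU'⟩ := h
  exact ⟨φ ⁻¹' U, fun x hx y hy hxy => hU _ hx _ hy (φ.map_adj_iff.2 hxy),
    fun x hx y hy hxy => hU' _ hx _ hy (φ.map_adj_iff.2 hxy)⟩

lemma IsPCAGraph.of_embedding (φ : G ↪g H) (h : IsPCAGraph H) : IsPCAGraph G := by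
  obtain ⟨N, hN, l, hinj, harc, hinc, hadj⟩ := h
  refine ⟨N, hN, l ∘ φ, hinj.comp φ.injective, fun v => harc (φ v),
    fun u v huv => hinc _ _ (φ.injective.ne huv), fun u v huv => ?_⟩
  rw [← φ.map_adj_iff]
  exact hadj _ _ (φ.injective.ne huv)

lemma isBipartite_compl_of_cliques {C D : Set V}
    (hC : ∀ x ∈ C, ∀ y ∈ C, x ∈ ClosedNbhd G y) (hD : ∀ x ∈ D, ∀ y ∈ D, x ∈ ClosedNbhd G y)
    (hcover : ∀ x, x ∈ C ∨ x ∈ D) : IsBipartite Gᶜ := by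
  have not_adj : ∀ {x y}, x ∈ ClosedNbhd G y → ¬ Gᶜ.Adj x y := fun h hxy =>
    ((G.compl_adj _ _).1 hxy).2 ((mem_closedNbhd_iff_adj hxy.ne).1 h)
  exact ⟨C, fun x hx y hy => not_adj (hC x hx y hy), fun x hx y hy =>
    not_adj (hD x ((hcover x).resolve_left hx) y ((hcover y).resolve_left hy))⟩

lemma nonempty_of_not_isBipartite (h : ¬ IsBipartite G) : Nonempty V := by
  by_contra hV
  rw [not_nonempty_iff] at hV
  exact h ⟨∅, fun u => isEmptyElim u, fun u => isEmptyElim u⟩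

end Graph

section Cliques

variable {n : ℕ} {G : SimpleGraph (ZMod n)} {u v w x y : ZMod n}

/-- The vertices whose closed neighborhood contains everything from `w` clockwise up to them. -/
def backReaching (G : SimpleGraph (ZMod n)) (w : ZMod n) : Set (ZMod n) :=
  {x | cwIcc w x ⊆ ClosedNbhd G x}

/-- The vertices whose closed neighborhood contains everything from them clockwise up to `w`. -/
def forwardReaching (G : SimpleGraph (ZMod n)) (w : ZMod n) : Set (ZMod n) :=
  {x | cwIcc x w ⊆ ClosedNbhd G x}

lemma closedNbhd_comap_neg (G : SimpleGraph (ZMod n)) (x : ZMod n) :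
    ClosedNbhd (G.comap (Equiv.neg (ZMod n))) (-x) = -ClosedNbhd G x := by
  rw [← image_neg_eq_neg]
  exact (image_closedNbhd (SimpleGraph.Iso.comap (Equiv.neg (ZMod n)) G).symm x).symm

lemma self_mem_backReaching (G : SimpleGraph (ZMod n)) (w : ZMod n) : w ∈ backReaching G w := by
  intro x hx
  rw [mem_cwIcc, cwDist_self, Nat.le_zero] at hx
  exact eq_of_cwDist_eq_zero hx ▸ self_mem_closedNbhd w

lemma mem_closedNbhd_of_mem_backReaching (hx : x ∈ backReaching G w)
    (hy : y ∈ backReaching G w) : x ∈ ClosedNbhd G y := by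
  rcases le_total (cwDist w x) (cwDist w y) with h | h
  · exact hy h
  · exact mem_closedNbhd_comm.1 (hx h)

variable [NeZero n]

lemma mem_closedNbhd_of_mem_forwardReaching (hx : x ∈ forwardReaching G w)
    (hy : y ∈ forwardReaching G w) : x ∈ ClosedNbhd G y := by
  rcases le_total (cwDist x w) (cwDist y w) with h | h
  · exact hy (mem_cwIcc_iff_right.2 h)
  · exact mem_closedNbhd_comm.1 (hx (mem_cwIcc_iff_right.2 h))

lemma mem_backReaching_or_mem_forwardReaching (hG : ∀ x, IsArc n (ClosedNbhd G x))
    (h : w ∈ ClosedNbhd G x) : x ∈ backReaching G w ∨ x ∈ forwardReaching G w :=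
  ((isArc_iff_forall_cwIcc (self_mem_closedNbhd x)).1 (hG x) w h).symm

lemma closedNbhd_ne_univ (hG : ∀ x, IsArc n (ClosedNbhd G x)) (hnb : ¬ IsBipartite Gᶜ)
    (v : ZMod n) : ClosedNbhd G v ≠ univ := fun huniv =>
  hnb <| isBipartite_compl_of_cliques
    (fun _ hx _ hy => mem_closedNbhd_of_mem_backReaching hx hy)
    (fun _ hx _ hy => mem_closedNbhd_of_mem_forwardReaching hx hy)
    fun x => mem_backReaching_or_mem_forwardReaching hG
      (mem_closedNbhd_comm.1 (huniv ▸ mem_univ x))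

/-- The vertices of `[u, v)` that reach back to `u`, and the vertices of `(v, u)` that reach
forward to `v`. When `N[u]` contains `[u, v]` and `N[v]` contains `[v, u]`, the sets
`splitClique G u v` and `splitClique G v u` are two cliques that cover `G`. -/
def splitClique (G : SimpleGraph (ZMod n)) (u v : ZMod n) : Set (ZMod n) :=
  {x | x ∈ backReaching G u ∧ cwDist u x < cwDist u v} ∪
    {x | x ∈ forwardReaching G v ∧ cwDist u v < cwDist u x}

lemma mem_closedNbhd_of_mem_splitClique (hx : x ∈ splitClique G u v)
    (hy : y ∈ splitClique G u v) : x ∈ ClosedNbhd G y := by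
  have cross : ∀ {x y}, cwDist u x < cwDist u v → cwDist u v < cwDist u y →
      y ∈ forwardReaching G v → x ∈ ClosedNbhd G y := by
    intro x y hxv hvy hy
    refine hy ?_
    rw [mem_cwIcc_iff_right]
    have := cwDist_add_cwDist u x v
    have := cwDist_add_cwDist u y v
    have := cwDist_lt u y
    have := cwDist_lt x v
    omega
  rcases hx with ⟨hx, hxv⟩ | ⟨hx, hxv⟩ <;> rcases hy with ⟨hy, hyv⟩ | ⟨hy, hyv⟩
  · exact mem_closedNbhd_of_mem_backReaching hx hy
  · exact cross hxv hyv hy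
  · exact mem_closedNbhd_comm.1 (cross hyv hxv hx)
  · exact mem_closedNbhd_of_mem_forwardReaching hx hy

lemma mem_splitClique_or_mem_splitClique_swap (hG : ∀ x, IsArc n (ClosedNbhd G x))
    (hu : cwIcc u v ⊆ ClosedNbhd G u) (hx : cwDist u x < cwDist u v) :
    x ∈ splitClique G u v ∨ x ∈ splitClique G v u := by
  rcases eq_or_ne u x with rfl | hux
  · exact Or.inl (Or.inl ⟨self_mem_backReaching G u, hx⟩)
  rcases mem_backReaching_or_mem_forwardReaching hG (mem_closedNbhd_comm.1 (hu hx.le)) with h | h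
  · exact Or.inl (Or.inl ⟨h, hx⟩)
  · refine Or.inr (Or.inr ⟨h, ?_⟩)
    have huv : u ≠ v := by
      rintro rfl
      simp [cwDist_self] at hx
    have := cwDist_pos hux
    have := cwDist_add_cwDist v u x
    have := cwDist_add_cwDist_swap huv
    omega

lemma isBipartite_compl_of_cwIcc_subset (hG : ∀ x, IsArc n (ClosedNbhd G x)) (huv : u ≠ v)
    (hu : cwIcc u v ⊆ ClosedNbhd G u) (hv : cwIcc v u ⊆ ClosedNbhd G v) : IsBipartite Gᶜ := by
  refine isBipartite_compl_of_cliques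
    (fun _ hx _ hy => mem_closedNbhd_of_mem_splitClique (u := u) (v := v) hx hy)
    (fun _ hx _ hy => mem_closedNbhd_of_mem_splitClique (u := v) (v := u) hx hy) fun x => ?_
  rcases lt_or_ge (cwDist u x) (cwDist u v) with hx | hx
  · exact mem_splitClique_or_mem_splitClique_swap hG hu hx
  · refine (mem_splitClique_or_mem_splitClique_swap hG hv ?_).symm
    have := cwDist_add_cwDist u v x
    have := cwDist_add_cwDist_swap huv
    have := cwDist_lt u x
    have := cwDist_lt v x
    omega

lemma cwIcc_subset_closedNbhd_right (hG : ∀ x, IsArc n (ClosedNbhd G x))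
    (hnb : ¬ IsBipartite Gᶜ) (h : cwIcc u v ⊆ ClosedNbhd G u) : cwIcc u v ⊆ ClosedNbhd G v := by
  rcases eq_or_ne u v with rfl | huv
  · exact h
  have hmem : u ∈ ClosedNbhd G v := mem_closedNbhd_comm.1 (h (right_mem_cwIcc u v))
  rcases mem_backReaching_or_mem_forwardReaching hG hmem with hv | hv
  · exact hv
  · exact (hnb (isBipartite_compl_of_cwIcc_subset hG huv h hv)).elim

lemma cwIcc_subset_closedNbhd_iff (hG : ∀ x, IsArc n (ClosedNbhd G x))
    (hnb : ¬ IsBipartite Gᶜ) : cwIcc u v ⊆ ClosedNbhd G u ↔ cwIcc u v ⊆ ClosedNbhd G v := by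
  refine ⟨cwIcc_subset_closedNbhd_right hG hnb, fun h => ?_⟩
  -- The reflection of the circle turns the missing implication into the known one.
  let φ : G ≃g G.comap (Equiv.neg (ZMod n)) :=
    (SimpleGraph.Iso.comap (Equiv.neg (ZMod n)) G).symm
  have hG' (x : ZMod n) : IsArc n (ClosedNbhd (G.comap (Equiv.neg (ZMod n))) x) := by
    rw [← neg_neg x, closedNbhd_comap_neg]
    exact (hG _).neg
  have hnb' : ¬ IsBipartite (G.comap (Equiv.neg (ZMod n)))ᶜ := fun hb =>
    hnb (hb.of_embedding (SimpleGraph.Embedding.complEquiv φ.toEmbedding))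
  rw [← neg_subset_neg, neg_cwIcc, ← closedNbhd_comap_neg] at h ⊢
  exact cwIcc_subset_closedNbhd_right hG' hnb' h

end Cliques

section ArcModel

variable {V : Type*} {G : SimpleGraph V}

lemma isPCAGraph_of_cwArc {N : ℕ} [NeZero N] (s : V → ZMod N) (k : V → ℕ) (hk : ∀ v, k v < N)
    (hproper : ∀ u v, u ≠ v → k u < cwDist (s u) (s v) + k v)
    (hnbhd : ∀ u v, u ∈ ClosedNbhd G v ↔ cwDist (s v) (s u) < k v ∨ cwDist (s u) (s v) < k u) :
    IsPCAGraph G := by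
  have hpos : ∀ v, 0 < k v := fun v => by
    simpa only [cwDist_self, or_self] using (hnbhd v v).1 (self_mem_closedNbhd v)
  have hincomp : ∀ u v, u ≠ v → ¬ cwArc (s u) (k u) ⊆ cwArc (s v) (k v) := fun u v huv hsub =>
    (hproper v u huv.symm).not_ge (cwDist_add_le_of_cwArc_subset (hpos u) (hk v) hsub)
  refine ⟨N, NeZero.pos N, fun v => cwArc (s v) (k v), ?_, fun v => ⟨?_, ?_⟩, hincomp, ?_⟩
  · intro u v huv
    by_contra hne
    exact hincomp u v hne huv.subset
  · exact ⟨s v, (cwDist_self (s v)).trans_lt (hpos v)⟩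
  · exact isArc_iff_exists_cwArc.2 ⟨s v, k v, rfl⟩
  · intro u v huv
    rw [cwArc_inter_cwArc_nonempty (hpos u) (hpos v), ← mem_closedNbhd_iff_adj huv, hnbhd,
      or_comm]

lemma IsPCAGraph.exists_cwArc (h : IsPCAGraph G) :
    ∃ N : ℕ, ∃ _ : NeZero N, ∃ (s : V → ZMod N) (k : V → ℕ),
      (∀ u v, u ≠ v → k u < cwDist (s u) (s v) + k v) ∧
      ∀ u v, u ∈ ClosedNbhd G v ↔ cwDist (s v) (s u) < k v ∨ cwDist (s u) (s v) < k u := by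
  obtain ⟨N, hN, l, -, harc, hincomp, hadj⟩ := h
  have : NeZero N := ⟨hN.ne'⟩
  choose s k hl using fun v => isArc_iff_exists_cwArc.1 (harc v).2
  have hpos : ∀ v, 0 < k v := by
    intro v
    obtain ⟨x, hx⟩ := (harc v).1
    rw [hl] at hx
    exact (Nat.zero_le _).trans_lt hx
  refine ⟨N, this, s, k, fun u v huv => ?_, fun u v => ?_⟩
  · by_contra! hle
    refine hincomp v u huv.symm ?_
    rw [hl, hl]
    exact cwArc_subset_cwArc hle
  · rcases eq_or_ne u v with rfl | huv
    · simp only [self_mem_closedNbhd, cwDist_self, hpos, or_self]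
    · rw [mem_closedNbhd_iff_adj huv, hadj u v huv, hl, hl,
        cwArc_inter_cwArc_nonempty (hpos u) (hpos v), or_comm]

end ArcModel

section Stretch

variable {n : ℕ}

/-- The circle `ZMod n` spread out on a circle with `m` times as many points. -/
def stretch (m : ℕ) (x : ZMod n) : ZMod (m * n) :=
  ((m * x.val : ℕ) : ZMod (m * n))

variable [NeZero n]

lemma cwDist_stretch (m : ℕ) [NeZero m] (x y : ZMod n) :
    cwDist (stretch m x) (stretch m y) = m * cwDist x y := by
  have hval : y.val ≡ x.val + cwDist x y [MOD n] := by
    rw [← ZMod.natCast_eq_natCast_iff]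
    simp [cwDist]
  have hstretch : stretch m y = stretch m x + ((m * cwDist x y : ℕ) : ZMod (m * n)) := by
    rw [stretch, stretch, ← Nat.cast_add, ← mul_add, ZMod.natCast_eq_natCast_iff]
    exact hval.mul_left' m
  rw [hstretch, cwDist_add_natCast]
  exact Nat.mul_lt_mul_of_pos_left (cwDist_lt x y) (NeZero.pos m)

lemma isPCAGraph_of_reach {G : SimpleGraph (ZMod n)} (q : ZMod n → ℕ) (hq : ∀ v, q v + 1 < n)
    (hmono : ∀ u v, q u ≤ cwDist u v + q v)
    (hnbhd : ∀ u v, u ∈ ClosedNbhd G v ↔ cwDist v u ≤ q v ∨ cwDist u v ≤ q u) :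
    IsPCAGraph G := by
  have lt_iff : ∀ d q : ℕ, q < n → ((n + 1) * d < n * (q + 1) ↔ d ≤ q) := by
    intro d q hqn
    constructor
    · intro h
      by_contra! hlt
      nlinarith
    · intro h
      nlinarith
  -- The arc of `v` ends in the block of `v + q v`, earlier the larger `q v` is, so that two arcs
  -- whose reaches end at the same vertex are incomparable.
  refine isPCAGraph_of_cwArc (stretch (n + 1)) (fun v => n * (q v + 1)) (fun v => ?_)
    (fun u v huv => ?_) fun u v => ?_
  · have := hq v
    nlinarith
  · rw [cwDist_stretch]
    have := hmono u v
    have := cwDist_pos huv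
    nlinarith
  · rw [cwDist_stretch, cwDist_stretch, lt_iff _ _ (by have := hq v; omega),
      lt_iff _ _ (by have := hq u; omega), hnbhd]

end Stretch

section OrderingToModel

variable {n : ℕ} [NeZero n]

lemma isPCAGraph_of_isArc_closedNbhd {G : SimpleGraph (ZMod n)}
    (hG : ∀ x, IsArc n (ClosedNbhd G x)) (hnb : ¬ IsBipartite Gᶜ) : IsPCAGraph G := by
  choose q hqn hq using fun v =>
    exists_forward_reach (self_mem_closedNbhd v) (closedNbhd_ne_univ hG hnb v)
  refine isPCAGraph_of_reach q hqn (fun u v => ?_) fun u v => ?_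
  · by_contra! hlt
    set w := u + (q u : ZMod n)
    have hw : cwDist u w = q u := cwDist_add_natCast u (by have := hqn u; omega)
    have hv : v ∈ cwIcc u w := by
      rw [mem_cwIcc]
      omega
    have huw : cwIcc u w ⊆ ClosedNbhd G w :=
      (cwIcc_subset_closedNbhd_iff hG hnb).1 ((hq u w).2 hw.le)
    have hvw : cwIcc v w ⊆ ClosedNbhd G v :=
      (cwIcc_subset_closedNbhd_iff hG hnb).2 ((cwIcc_subset_cwIcc_left hv).trans huw)
    have := (hq v w).1 hvw
    have := cwDist_add_cwDist u v w
    omega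
  · rw [← hq, ← hq, cwIcc_subset_closedNbhd_iff hG hnb (u := u)]
    exact ⟨(isArc_iff_forall_cwIcc (self_mem_closedNbhd v)).1 (hG v) u,
      fun h => h.elim (· (right_mem_cwIcc v u)) (· (left_mem_cwIcc u v))⟩

lemma isPCAGraph_of_isArc_image {V : Type*} {G : SimpleGraph V} (hnb : ¬ IsBipartite Gᶜ)
    (f : V ≃ ZMod n) (hf : ∀ v, IsArc n (f '' ClosedNbhd G v)) : IsPCAGraph G := by
  let φ : G ≃g G.comap f.symm := (SimpleGraph.Iso.comap f.symm G).symm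
  refine IsPCAGraph.of_embedding φ.toEmbedding (isPCAGraph_of_isArc_closedNbhd (fun x => ?_) ?_)
  · obtain ⟨v, rfl⟩ := φ.surjective x
    rw [← image_closedNbhd]
    exact hf v
  · exact fun h => hnb (h.of_embedding (SimpleGraph.Embedding.complEquiv φ.toEmbedding))

end OrderingToModel

section ModelToOrdering

variable {V : Type*} [Fintype V] [Nonempty V]

lemma exists_equiv_zmod_val_lt_iff {α : Type*} [LinearOrder α] {r : V → α}
    (hr : Function.Injective r) :
    ∃ f : V ≃ ZMod (Fintype.card V), ∀ x y, (f x).val < (f y).val ↔ r x < r y := by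
  have : NeZero (Fintype.card V) := ⟨Fintype.card_ne_zero⟩
  let _ : LinearOrder V := LinearOrder.lift' r hr
  let e : V ≃o Fin (Fintype.card V) := (Fintype.orderIsoFinOfCardEq V rfl).symm
  have val_finEquiv : ∀ {n : ℕ} [NeZero n] (i : Fin n), (ZMod.finEquiv n i).val = i := by
    rintro (_ | n) _ i
    · exact i.elim0
    · rfl
  refine ⟨e.toEquiv.trans (ZMod.finEquiv _).toEquiv, fun x y => ?_⟩
  simp only [Equiv.trans_apply, RingEquiv.toEquiv_eq_coe, EquivLike.coe_coe, val_finEquiv]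
  exact e.lt_iff_lt

lemma exists_equiv_zmod_cwDist_le_iff {N : ℕ} [NeZero N] {s : V → ZMod N}
    (hs : Function.Injective s) : ∃ f : V ≃ ZMod (Fintype.card V), ∀ u x y,
      cwDist (f u) (f x) ≤ cwDist (f u) (f y) ↔ cwDist (s u) (s x) ≤ cwDist (s u) (s y) := by
  have : NeZero (Fintype.card V) := ⟨Fintype.card_ne_zero⟩
  obtain ⟨f, hf⟩ := exists_equiv_zmod_val_lt_iff ((ZMod.val_injective N).comp hs)
  refine ⟨f, fun u x y => ?_⟩
  rw [cwDist_le_cwDist_iff_val, cwDist_le_cwDist_iff_val]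
  simp only [← not_lt, hf, Function.comp_apply]

lemma IsPCAGraph.exists_equiv_isArc {G : SimpleGraph V} (h : IsPCAGraph G) :
    ∃ f : V ≃ ZMod (Fintype.card V),
      ∀ v, IsArc (Fintype.card V) (f '' ClosedNbhd G v) := by
  have : NeZero (Fintype.card V) := ⟨Fintype.card_ne_zero⟩
  obtain ⟨N, _, s, k, hproper, hnbhd⟩ := h.exists_cwArc
  have hs : Function.Injective s := by
    intro u v huv
    by_contra hne
    have h₁ := hproper u v hne
    have h₂ := hproper v u (Ne.symm hne)
    rw [huv, cwDist_self] at h₁ h₂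
    omega
  obtain ⟨f, hf⟩ := exists_equiv_zmod_cwDist_le_iff hs
  refine ⟨f, fun v => isArc_of_forall_cwIcc (mem_image_of_mem f (self_mem_closedNbhd v)) ?_⟩
  rintro _ ⟨b, hb, rfl⟩
  refine ((hnbhd b v).1 hb).imp (fun hb y hy => ?_) fun hb y hy => ?_ <;>
    obtain ⟨w, rfl⟩ := f.surjective y <;>
    rw [mem_cwIcc, hf] at hy <;>
    refine mem_image_of_mem f ((hnbhd w v).2 ?_)
  · exact Or.inl (hy.trans_lt hb)
  · right
    rcases eq_or_ne b w with rfl | hbw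
    · exact hb
    -- The arc of `w` starts inside the arc of `b`, so it ends later and also contains `s v`.
    have := hproper b w hbw
    have := cwDist_add_cwDist (s b) (s w) (s v)
    have := cwDist_lt (s w) (s v)
    omega

end ModelToOrdering

/-- Tucker. For a finite simple graph `G` whose complement is not
bipartite, `N[G]` is a circular-arc hypergraph iff `G` is a proper circular-arc graph. -/
theorem stmt3 {V : Type*} [Fintype V] (G : SimpleGraph V)
    (hnb : ¬ IsBipartite Gᶜ) :
    (∃ f : V ≃ ZMod (Fintype.card V),
      ∀ v, IsArc (Fintype.card V) (f '' ClosedNbhd G v)) ↔ IsPCAGraph G := by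
  have : Nonempty V := nonempty_of_not_isBipartite hnb
  have : NeZero (Fintype.card V) := ⟨Fintype.card_ne_zero⟩
  exact ⟨fun ⟨f, hf⟩ => isPCAGraph_of_isArc_image hnb f hf,
    IsPCAGraph.exists_equiv_isArc⟩
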